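/- For every s ∈ ℕ, s ≥ 1, and every 0 < δ ≤ 1, there exists a δ-bracketing cover of [0,1]^s of cardinality at most 2^{s−1}·(s^s/s!)·(δ^{−1}+1)^s; that is, N_[](s,δ) ≤ 2^{s−1}·(s^s/s!)·(δ^{−1}+1)^s. -/

import Mathlib

open Finset

/-- `B` is a `δ`-bracketing cover of `[0,1]^s`: a finite set of pairs `(v, w)` of points of the
unit cube with `v ≤ w` componentwise and `∏ i, w i − ∏ i, v i ≤ δ`, such that every point `x` of
the unit cube satisfies `v ≤ x ≤ w` componentwise for some `(v, w) ∈ B`. -/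
def IsBracketingCover (s : ℕ) (δ : ℝ) (B : Finset ((Fin s → ℝ) × (Fin s → ℝ))) : Prop :=
  (∀ p ∈ B, (∀ i, p.1 i ∈ Set.Icc (0 : ℝ) 1) ∧ (∀ i, p.2 i ∈ Set.Icc (0 : ℝ) 1) ∧
      p.1 ≤ p.2 ∧ ∏ i, p.2 i - ∏ i, p.1 i ≤ δ) ∧
  ∀ x : Fin s → ℝ, (∀ i, x i ∈ Set.Icc (0 : ℝ) 1) → ∃ p ∈ B, p.1 ≤ x ∧ x ≤ p.2

/-! Cut `[0,1]^(s+1)` into the slabs `j / (m + 1) ≤ x 0 ≤ (j + 1) / (m + 1)`, `j ≤ m`. Replacing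
a bracket `(v, w)` in the remaining `s` coordinates by `[a, b] × [v, w]` changes its weight
`∏ w - ∏ v` to `b (∏ w - ∏ v) + (b - a) ∏ v ≤ b (∏ w - ∏ v) + (b - a)`. So the slab with
`b = (j + 1) / (m + 1)` tolerates an `s / (j + 1)`-cover when an `(s + 1) / (m + 1)`-cover is
wanted: slabs close to the origin need only coarse covers. If these have `(j + s).choose s`
elements, the cover of `[0,1]^(s+1)` has `∑ j ≤ m, (j + s).choose s = (m + s + 1).choose (s + 1)`.
In dimension `s`, the choice `m = ⌊s / δ⌋` then gives even the bound without `2 ^ (s - 1)`. -/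

/-- The brackets `[a, b] × [v, w]` in dimension `s + 1`, for `(v, w)` running through `C`: these
cover the slab `a ≤ x 0 ≤ b` when `C` covers `[0,1]^s`. -/
noncomputable def prependInterval {s : ℕ} (a b : ℝ) (C : Finset ((Fin s → ℝ) × (Fin s → ℝ))) :
    Finset ((Fin (s + 1) → ℝ) × (Fin (s + 1) → ℝ)) :=
  C.image fun p => (Fin.cons a p.1, Fin.cons b p.2)

theorem card_prependInterval_le {s : ℕ} (a b : ℝ) (C : Finset ((Fin s → ℝ) × (Fin s → ℝ))) :
    (prependInterval a b C).card ≤ C.card :=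
  card_image_le

theorem exists_lt_mem_Icc_succ {α : Type*} [LinearOrder α] {f : ℕ → α} (hf : Monotone f) {n : ℕ}
    (hn : n ≠ 0) {x : α} (hx : x ∈ Set.Icc (f 0) (f n)) :
    ∃ j < n, x ∈ Set.Icc (f j) (f (j + 1)) := by
  rcases hx.1.eq_or_lt with rfl | h0
  · exact ⟨0, Nat.pos_of_ne_zero hn, le_rfl, hf zero_le_one⟩
  · have hcover : x ∈ ⋃ j ∈ Set.Ico 0 n, Set.Ioc (f j) (f (j + 1)) :=
      (hf.biUnion_Ico_Ioc_map_succ 0 n).ge ⟨h0, hx.2⟩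
    simp only [Set.mem_iUnion] at hcover
    obtain ⟨j, hj, hxj⟩ := hcover
    exact ⟨j, hj.2, Set.Ioc_subset_Icc_self hxj⟩

theorem choose_floor_mul_add_le {K : Type*} [Field K] [LinearOrder K] [IsStrictOrderedRing K]
    [FloorSemiring K] (s : ℕ) {x : K} (hx : 0 ≤ x) :
    ((⌊s * x⌋₊ + s).choose s : K) ≤ (s : K) ^ s / (s.factorial : K) * (x + 1) ^ s :=
  calc ((⌊s * x⌋₊ + s).choose s : K)
      ≤ ((⌊s * x⌋₊ + s : ℕ) : K) ^ s / (s.factorial : K) := Nat.choose_le_pow_div _ _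
    _ ≤ (s * x + s) ^ s / (s.factorial : K) := by
        push_cast
        gcongr
        exact Nat.floor_le (by positivity)
    _ = (s : K) ^ s / (s.factorial : K) * (x + 1) ^ s := by
        rw [← mul_add_one, mul_pow, div_mul_eq_mul_div]

namespace IsBracketingCover

variable {s : ℕ} {δ ε : ℝ} {C : Finset ((Fin s → ℝ) × (Fin s → ℝ))}

theorem mono (hC : IsBracketingCover s δ C) (hδε : δ ≤ ε) : IsBracketingCover s ε C :=
  ⟨fun p hp =>
    have ⟨hv, hw, hvw, hvol⟩ := hC.1 p hp
    ⟨hv, hw, hvw, hvol.trans hδε⟩, hC.2⟩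

theorem zero_dim : IsBracketingCover 0 0 {0} :=
  ⟨fun _ _ => ⟨finZeroElim, finZeroElim, finZeroElim, by simp⟩,
    fun _ _ => ⟨0, mem_singleton_self 0, finZeroElim, finZeroElim⟩⟩

theorem bracket_of_mem_prependInterval (hC : IsBracketingCover s ε C) {a b : ℝ} (ha : 0 ≤ a)
    (hab : a ≤ b) (hb : b ≤ 1) {p : (Fin (s + 1) → ℝ) × (Fin (s + 1) → ℝ)}
    (hp : p ∈ prependInterval a b C) :
    (∀ i, p.1 i ∈ Set.Icc (0 : ℝ) 1) ∧ (∀ i, p.2 i ∈ Set.Icc (0 : ℝ) 1) ∧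
      p.1 ≤ p.2 ∧ ∏ i, p.2 i - ∏ i, p.1 i ≤ b * ε + (b - a) := by
  obtain ⟨⟨v, w⟩, hq, rfl⟩ := mem_image.1 hp
  obtain ⟨hv, hw, hvw, hvol⟩ := hC.1 _ hq
  refine ⟨Fin.cases ⟨ha, hab.trans hb⟩ hv, Fin.cases ⟨ha.trans hab, hb⟩ hw,
    (Fin.cons_le_cons (α := fun _ => ℝ)).2 ⟨hab, hvw⟩, ?_⟩
  have hv1 : ∏ i, v i ≤ 1 := prod_le_one (fun i _ => (hv i).1) fun i _ => (hv i).2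
  simp only [Fin.prod_cons]
  calc b * ∏ i, w i - a * ∏ i, v i
      = b * (∏ i, w i - ∏ i, v i) + (b - a) * ∏ i, v i := by ring
    _ ≤ b * ε + (b - a) * 1 := by
        gcongr
        exact ha.trans hab
    _ = b * ε + (b - a) := by rw [mul_one]

theorem exists_mem_prependInterval (hC : IsBracketingCover s ε C) {a b : ℝ} {x : Fin (s + 1) → ℝ}
    (hx : ∀ i, x i ∈ Set.Icc (0 : ℝ) 1) (hx0 : x 0 ∈ Set.Icc a b) :
    ∃ p ∈ prependInterval a b C, p.1 ≤ x ∧ x ≤ p.2 := by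
  obtain ⟨q, hq, hvx, hxw⟩ := hC.2 (Fin.tail x) fun i => hx i.succ
  exact ⟨_, mem_image_of_mem _ hq, (Fin.cons_le (α := fun _ => ℝ)).2 ⟨hx0.1, hvx⟩,
    (Fin.le_cons (α := fun _ => ℝ)).2 ⟨hx0.2, hxw⟩⟩

theorem biUnion_prependInterval {a η : ℕ → ℝ} {n : ℕ} (ha : Monotone a) (ha0 : a 0 = 0)
    (han : a n = 1) {D : ℕ → Finset ((Fin s → ℝ) × (Fin s → ℝ))}
    (hD : ∀ j < n, IsBracketingCover s (η j) (D j))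
    (hδ : ∀ j < n, a (j + 1) * η j + (a (j + 1) - a j) ≤ δ) :
    IsBracketingCover (s + 1) δ
      ((range n).biUnion fun j => prependInterval (a j) (a (j + 1)) (D j)) := by
  refine ⟨fun p hp => ?_, fun x hx => ?_⟩
  · obtain ⟨j, hj, hpj⟩ := mem_biUnion.1 hp
    have hjn : j < n := mem_range.1 hj
    obtain ⟨hv, hw, hvw, hvol⟩ := (hD j hjn).bracket_of_mem_prependInterval
      (ha0 ▸ ha j.zero_le) (ha j.le_succ) (han ▸ ha hjn) hpj
    exact ⟨hv, hw, hvw, hvol.trans (hδ j hjn)⟩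
  · have hn : n ≠ 0 := by
      rintro rfl
      exact zero_ne_one (ha0.symm.trans han)
    obtain ⟨j, hjn, hxj⟩ := exists_lt_mem_Icc_succ ha hn (x := x 0) (by rw [ha0, han]; exact hx 0)
    obtain ⟨p, hp, hpx⟩ := (hD j hjn).exists_mem_prependInterval hx hxj
    exact ⟨p, mem_biUnion.2 ⟨j, mem_range.2 hjn, hp⟩, hpx⟩

end IsBracketingCover

theorem exists_isBracketingCover_card_le_choose (s m : ℕ) :
    ∃ B : Finset ((Fin s → ℝ) × (Fin s → ℝ)),
      IsBracketingCover s ((s : ℝ) / (m + 1)) B ∧ B.card ≤ (m + s).choose s := by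
  induction s generalizing m with
  | zero => exact ⟨{0}, by simpa using IsBracketingCover.zero_dim, by simp⟩
  | succ s ih =>
    choose D hD hDcard using ih
    let a : ℕ → ℝ := fun j => j / (m + 1)
    refine ⟨(range (m + 1)).biUnion fun j => prependInterval (a j) (a (j + 1)) (D j), ?_, ?_⟩
    · have ha : Monotone a := fun i j hij => by
        dsimp only [a]
        gcongr
      have ha0 : a 0 = 0 := by simp [a]
      have ham : a (m + 1) = 1 := by
        simp only [a, Nat.cast_add_one]
        exact div_self m.cast_add_one_ne_zero
      have hvol (j : ℕ) : a (j + 1) * ((s : ℝ) / (j + 1)) + (a (j + 1) - a j) =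
          ((s + 1 : ℕ) : ℝ) / (m + 1) := by
        simp only [a, Nat.cast_add_one]
        field_simp
        ring
      exact .biUnion_prependInterval ha ha0 ham (fun j _ => hD j) fun j _ => (hvol j).le
    · calc _ ≤ ∑ j ∈ range (m + 1), (prependInterval (a j) (a (j + 1)) (D j)).card :=
          card_biUnion_le
        _ ≤ ∑ j ∈ range (m + 1), (j + s).choose s :=
          sum_le_sum fun j _ => (card_prependInterval_le _ _ _).trans (hDcard j)
        _ = (m + (s + 1)).choose (s + 1) := Nat.sum_range_add_choose m s

theorem bracketing_number_gnewuch_bound_general (s : ℕ) {δ : ℝ} (hδ : 0 < δ) :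
    ∃ B : Finset ((Fin s → ℝ) × (Fin s → ℝ)), IsBracketingCover s δ B ∧
      (B.card : ℝ) ≤ (s : ℝ) ^ s / (Nat.factorial s : ℝ) * (δ⁻¹ + 1) ^ s := by
  obtain ⟨B, hB, hcard⟩ := exists_isBracketingCover_card_le_choose s ⌊s * δ⁻¹⌋₊
  have hwidth : (s : ℝ) / (⌊s * δ⁻¹⌋₊ + 1) ≤ δ := by
    rw [div_le_comm₀ (by positivity) hδ, div_eq_mul_inv]
    exact (Nat.lt_floor_add_one _).le
  exact ⟨B, hB.mono hwidth,
    (Nat.cast_le.2 hcard).trans (choose_floor_mul_add_le s (inv_nonneg.2 hδ.le))⟩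

/-- **Gnewuch's upper bound for bracketing numbers.** For `s ≥ 1` and `0 < δ ≤ 1` there is a
`δ`-bracketing cover of `[0,1]^s` of cardinality at most `2^(s-1) (s^s / s!) (δ⁻¹ + 1)^s`. -/
theorem bracketing_number_gnewuch_bound (s : ℕ) (hs : 1 ≤ s) (δ : ℝ) (hδ0 : 0 < δ)
    (hδ1 : δ ≤ 1) :
    ∃ B : Finset ((Fin s → ℝ) × (Fin s → ℝ)), IsBracketingCover s δ B ∧
      (B.card : ℝ) ≤ (2 : ℝ) ^ ((s : ℤ) - 1) * ((s : ℝ) ^ s / (Nat.factorial s : ℝ)) *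
        (δ⁻¹ + 1) ^ s := by
  obtain ⟨B, hB, hcard⟩ := bracketing_number_gnewuch_bound_general s hδ0
  have hfactor : (1 : ℝ) ≤ 2 ^ ((s : ℤ) - 1) := one_le_zpow₀ one_le_two (by omega)
  rw [mul_assoc]
  exact ⟨B, hB, hcard.trans (le_mul_of_one_le_left (by positivity) hfactor)⟩
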